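/- arXiv:2009.07248 — 9 statements merged into one kernel-verified Lean document; each statement's English description precedes it below -/
import Mathlib

section
/- For every feasible chain S of a generalized incremental knapsack instance there exists a bijection π : N → {1,…,n} with Ψ(π) ≥ Φ(S). In fact, any bijection π that lists the items of S_1∖S_0, then S_2∖S_1, …, then S_T∖S_{T−1}, and finally the items of N∖S_T (each block in an arbitrary internal order) satisfies Ψ(π) ≥ Φ(S). -/
/-!
In an order that respects insertion times, every item `j` placed no later than an item `i`
inserted at period `t` has itself been inserted by period `t`. Hence the items counted in the
completion time of `i` all lie in `S t`, so that completion time is at most `w (S t) ≤ W t`, and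
period `t` competes in the maximum defining the profit of `i` (`le_itemProfit_insTime`).
Grouping the profit of the chain by items, where each inserted item contributes `p i t` at exactly
one period, its insertion time (`mem_sdiff_iff_insTime_eq`), then gives the inequality by summing
over `i`. An order of this kind exists: rank the items lexicographically by insertion time and
index (`exists_isPerm_of_key`).
-/

open Finset

noncomputable section
open scoped Classical

namespace GIK

variable {n : ℕ}

/-- Profit `Φ` of a chain `S : ℕ → Finset (Fin n)` (convention `S 0 = ∅`). -/
def chainProfit (T : ℕ) (p : Fin n → ℕ → ℝ) (S : ℕ → Finset (Fin n)) : ℝ :=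
  ∑ t ∈ Finset.Icc 1 T, ∑ i ∈ S t \ S (t - 1), p i t

/-- `S` is a chain: `S 0 = ∅` and the sets are nested along `0,…,T`. -/
def IsChainGIK (T : ℕ) (S : ℕ → Finset (Fin n)) : Prop :=
  S 0 = ∅ ∧ ∀ t < T, S t ⊆ S (t + 1)

/-- Feasible chain: a chain whose total weight fits each period's capacity. -/
def FeasibleChain (T : ℕ) (w : Fin n → ℝ) (W : ℕ → ℝ) (S : ℕ → Finset (Fin n)) : Prop :=
  IsChainGIK T S ∧ ∀ t ∈ Finset.Icc 1 T, ∑ i ∈ S t, w i ≤ W t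

/-- `π` is a bijection from `Q` onto `{1, …, |Q|}`. -/
def IsPerm (Q : Finset (Fin n)) (π : Fin n → ℕ) : Prop :=
  Set.BijOn π ↑Q ↑(Finset.Icc 1 Q.card)

/-- Completion time `C_π(i)` of item `i` in a permutation `π` of `Q`. -/
def comp (w : Fin n → ℝ) (Q : Finset (Fin n)) (π : Fin n → ℕ) (i : Fin n) : ℝ :=
  ∑ j ∈ Q.filter (fun j => π j ≤ π i), w j

/-- Profit `φ_π(i)` of item `i` under a permutation `π` of `Q`:
the best profit `p i t` over periods `t ∈ {1,…,T}` whose capacity is at least `C_π(i)`,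
where the fictitious period `T+1` (infinite capacity, zero profit) is accounted for
by inserting `0` into the maximum. -/
def itemProfit (T : ℕ) (w : Fin n → ℝ) (W : ℕ → ℝ) (p : Fin n → ℕ → ℝ)
    (Q : Finset (Fin n)) (π : Fin n → ℕ) (i : Fin n) : ℝ :=
  (insert (0 : ℝ)
      (((Finset.Icc 1 T).filter (fun t => comp w Q π i ≤ W t)).image (fun t => p i t))).max'
    (Finset.insert_nonempty _ _)

/-- Total profit `Ψ(π)` of a permutation `π` of `Q`. -/
def permProfit (T : ℕ) (w : Fin n → ℝ) (W : ℕ → ℝ) (p : Fin n → ℕ → ℝ)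
    (Q : Finset (Fin n)) (π : Fin n → ℕ) : ℝ :=
  ∑ i ∈ Q, itemProfit T w W p Q π i

/-- Insertion time of item `i` in a chain `S` (equal to `T+1` if `i` is never inserted). -/
def insTime (T : ℕ) (S : ℕ → Finset (Fin n)) (i : Fin n) : ℕ :=
  if h : ((Finset.Icc 1 T).filter (fun t => i ∈ S t)).Nonempty
  then ((Finset.Icc 1 T).filter (fun t => i ∈ S t)).min' h
  else T + 1

/-- `K = ⌈log_{1+ε} (Σ_i w_i)⌉`. -/
def Kof (w : Fin n → ℝ) (ε : ℝ) : ℕ := ⌈Real.logb (1 + ε) (∑ i, w i)⌉₊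

/-- Membership of `x` in the interval `I_k` (`I_0 = [0,1]`, `I_k = ((1+ε)^{k-1}, (1+ε)^k]`). -/
def inInterval (ε : ℝ) (k : ℕ) (x : ℝ) : Prop :=
  if k = 0 then x ∈ Set.Icc (0 : ℝ) 1
  else x ∈ Set.Ioc ((1 + ε) ^ (k - 1)) ((1 + ε) ^ k)

/-- Item `i` is `k`-heavy: `w i ≥ ε² (1+ε)^k`. -/
def Heavy (w : Fin n → ℝ) (ε : ℝ) (k : ℕ) (i : Fin n) : Prop :=
  ε ^ 2 * (1 + ε) ^ k ≤ w i

/-- `Ψ_heavy(π)` for a permutation `π` of all items. -/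
def psiHeavy (T : ℕ) (w : Fin n → ℝ) (W : ℕ → ℝ) (p : Fin n → ℕ → ℝ) (ε : ℝ)
    (π : Fin n → ℕ) : ℝ :=
  ∑ k ∈ Finset.range (Kof w ε + 1),
    ∑ i ∈ Finset.univ.filter
        (fun i : Fin n => Heavy w ε k i ∧ inInterval ε k (comp w Finset.univ π i)),
      itemProfit T w W p Finset.univ π i

/-- `Ψ_light(π)` for a permutation `π` of all items. -/
def psiLight (T : ℕ) (w : Fin n → ℝ) (W : ℕ → ℝ) (p : Fin n → ℕ → ℝ) (ε : ℝ)
    (π : Fin n → ℕ) : ℝ :=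
  ∑ k ∈ Finset.range (Kof w ε + 1),
    ∑ i ∈ Finset.univ.filter
        (fun i : Fin n => ¬ Heavy w ε k i ∧ inInterval ε k (comp w Finset.univ π i)),
      itemProfit T w W p Finset.univ π i

/-- A pair `(S, π)` is bulky: `π` is a bijection `S → {1,…,|S|}` and every item whose
completion time lies in `I_k` is `k`-heavy. -/
def Bulky (w : Fin n → ℝ) (ε : ℝ) (S : Finset (Fin n)) (π : Fin n → ℕ) : Prop :=
  IsPerm S π ∧
    ∀ k ∈ Finset.range (Kof w ε + 1), ∀ i ∈ S,
      inInterval ε k (comp w S π i) → Heavy w ε k i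

/-- Capacity of bucket `B_k`. -/
def bucketCap (ε : ℝ) (k : ℕ) : ℝ := (1 + ε) ^ k - (1 + ε) ^ (k - 1)

/-- Assignment profit `q_{i,k}`. -/
def qProfit (T : ℕ) (W : ℕ → ℝ) (p : Fin n → ℕ → ℝ) (ε : ℝ) (i : Fin n) (k : ℕ) : ℝ :=
  (insert (0 : ℝ)
      (((Finset.Icc 1 T).filter (fun t => (1 + ε) ^ k ≤ W t)).image (fun t => p i t))).max'
    (Finset.insert_nonempty _ _)

/-- LP feasibility of an assignment vector `x` (indices `k ∈ {1,…,K-1}`, `i ∈ L_{k+1}`). -/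
def LPfeasible (w : Fin n → ℝ) (ε : ℝ) (x : Fin n → ℕ → ℝ) : Prop :=
  (∀ i : Fin n, ∀ k ∈ Finset.Icc 1 (Kof w ε - 1), ¬ Heavy w ε (k + 1) i → 0 ≤ x i k) ∧
  (∀ i : Fin n,
      ∑ k ∈ (Finset.Icc 1 (Kof w ε - 1)).filter (fun k => ¬ Heavy w ε (k + 1) i),
        x i k ≤ 1) ∧
  (∀ k ∈ Finset.Icc 1 (Kof w ε - 1),
      ∑ i ∈ Finset.univ.filter (fun i : Fin n => ¬ Heavy w ε (k + 1) i),
        w i * x i k ≤ bucketCap ε k)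

/-- IP feasibility: LP feasibility together with integrality. -/
def IPfeasible (w : Fin n → ℝ) (ε : ℝ) (x : Fin n → ℕ → ℝ) : Prop :=
  LPfeasible w ε x ∧
    ∀ i : Fin n, ∀ k ∈ Finset.Icc 1 (Kof w ε - 1), ¬ Heavy w ε (k + 1) i →
      x i k = 0 ∨ x i k = 1

/-- Objective value `Σ_k Σ_{i ∈ L_{k+1}} q_{i,k} x_{i,k}` of an assignment vector. -/
def assignProfit (T : ℕ) (w : Fin n → ℝ) (W : ℕ → ℝ) (p : Fin n → ℕ → ℝ) (ε : ℝ)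
    (x : Fin n → ℕ → ℝ) : ℝ :=
  ∑ k ∈ Finset.Icc 1 (Kof w ε - 1),
    ∑ i ∈ Finset.univ.filter (fun i : Fin n => ¬ Heavy w ε (k + 1) i),
      qProfit T W p ε i k * x i k

/-- Residual capacities `W_t^{-G} = min_{t ≤ τ ≤ T} (W_τ − w(G_τ))`. -/
def resW (T : ℕ) (w : Fin n → ℝ) (W : ℕ → ℝ) (G : ℕ → Finset (Fin n)) (t : ℕ) : ℝ :=
  if h : (Finset.Icc t T).Nonempty
  then (Finset.Icc t T).inf' h (fun τ => W τ - ∑ i ∈ G τ, w i)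
  else 0

/-- Feasible chain for the residual instance `I^{-G}` (item set `N ∖ G_T`,
capacities `resW`). -/
def ResFeasibleChain (T : ℕ) (w : Fin n → ℝ) (W : ℕ → ℝ) (G : ℕ → Finset (Fin n))
    (R : ℕ → Finset (Fin n)) : Prop :=
  IsChainGIK T R ∧ (∀ t ∈ Finset.Icc 1 T, Disjoint (R t) (G T)) ∧
    ∀ t ∈ Finset.Icc 1 T, ∑ i ∈ R t, w i ≤ resW T w W G t

/-- The instance restricted to item set `N'` is well-spaced with clusters `C 1, …, C M`. -/
def WellSpaced (w : Fin n → ℝ) (ε : ℝ) (N' : Finset (Fin n)) (M : ℕ)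
    (C : ℕ → Finset (Fin n)) : Prop :=
  (N' = (Finset.Icc 1 M).biUnion C) ∧
  (∀ m₁ ∈ Finset.Icc 1 M, ∀ m₂ ∈ Finset.Icc 1 M, m₁ ≠ m₂ → Disjoint (C m₁) (C m₂)) ∧
  (∀ m ∈ Finset.Icc 1 M, ∀ i₁ ∈ C m, ∀ i₂ ∈ C m, w i₂ / w i₁ ≤ (n : ℝ) ^ ((1 : ℝ) / ε)) ∧
  (∀ m₁ ∈ Finset.Icc 1 M, ∀ m₂ ∈ Finset.Icc 1 M, m₁ < m₂ →
    ∀ i₁ ∈ C m₁, ∀ i₂ ∈ C m₂,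
      (n : ℝ) ^ (1 + ((m₂ - m₁ - 1 : ℕ) : ℝ) / ε) ≤ w i₂ / w i₁)

/-- `C_{[a,b]} = C_a ∪ ⋯ ∪ C_b`. -/
def clusterUnion (C : ℕ → Finset (Fin n)) (a b : ℕ) : Finset (Fin n) :=
  (Finset.Icc a b).biUnion C

/-- `cross_m(π)`: the number of items of `Q` in clusters `C_{m+1},…,C_M` that appear in
`π` before the last item of `Q` belonging to `C_m` (zero when `Q ∩ C_m = ∅`). -/
def crossCount (M : ℕ) (C : ℕ → Finset (Fin n)) (Q : Finset (Fin n)) (π : Fin n → ℕ)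
    (m : ℕ) : ℕ :=
  ((Q ∩ clusterUnion C (m + 1) M).filter (fun i => π i < (Q ∩ C m).sup π)).card

/-- `cross_{ℳ⁻,ℳ⁺}(π)`: the number of items of `Q` in `ℳ⁺`-indexed clusters appearing in
`π` before the last item of `Q` in `ℳ⁻`-indexed clusters. -/
def crossSets (C : ℕ → Finset (Fin n)) (Mm Mp : Finset ℕ) (Q : Finset (Fin n))
    (π : Fin n → ℕ) : ℕ :=
  ((Q ∩ Mp.biUnion C).filter (fun i => π i < (Q ∩ Mm.biUnion C).sup π)).card

/-- A pair `(S, π)` is thin: `π` is a permutation of `S` and `cross_m(π) ≤ ⌈log₂ M⌉/ε`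
for every `m`. -/
def ThinPair (M : ℕ) (C : ℕ → Finset (Fin n)) (ε : ℝ) (S : Finset (Fin n))
    (π : Fin n → ℕ) : Prop :=
  IsPerm S π ∧
    ∀ m ∈ Finset.Icc 1 M, (crossCount M C S π m : ℝ) ≤ (Nat.clog 2 M : ℝ) / ε

/-- Membership of `(S, π)` in `Thin(m, ψ, Q_{>m})`. -/
def InThin (T : ℕ) (w : Fin n → ℝ) (W : ℕ → ℝ) (p : Fin n → ℕ → ℝ) (M : ℕ)
    (C : ℕ → Finset (Fin n)) (ε : ℝ) (m : ℕ) (ψ : ℝ) (Qm : Finset (Fin n))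
    (S : Finset (Fin n)) (π : Fin n → ℕ) : Prop :=
  ThinPair M C ε S π ∧ S ⊆ clusterUnion C 1 m ∪ Qm ∧ Qm ⊆ S ∧
    ψ ≤ permProfit T w W p S π

end GIK

namespace GIK

lemma IsChainGIK.subset {n T : ℕ} {S : ℕ → Finset (Fin n)} (h : IsChainGIK T S)
    {s t : ℕ} (hst : s ≤ t) (ht : t ≤ T) : S s ⊆ S t := by
  induction t, hst using Nat.le_induction with
  | base => exact Finset.Subset.refl _
  | succ t _ ih => exact (ih (by omega)).trans (h.2 t (by omega))

lemma mem_iff_insTime_le {n T : ℕ} {S : ℕ → Finset (Fin n)} (h : IsChainGIK T S)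
    {t : ℕ} (ht : t ≤ T) (i : Fin n) : i ∈ S t ↔ insTime T S i ≤ t := by
  constructor
  · intro hi
    have ht0 : t ≠ 0 := by
      rintro rfl
      simp [h.1] at hi
    have hmem : t ∈ (Finset.Icc 1 T).filter (fun t => i ∈ S t) := by
      simp only [Finset.mem_filter, Finset.mem_Icc]
      exact ⟨⟨by omega, ht⟩, hi⟩
    unfold insTime
    rw [dif_pos ⟨t, hmem⟩]
    exact Finset.min'_le _ _ hmem
  · intro hi
    unfold insTime at hi
    split_ifs at hi with hne
    · exact h.subset hi ht (Finset.mem_filter.1 (Finset.min'_mem _ hne)).2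
    · omega

/-- The items added at period `t` are exactly those with insertion time `t`. -/
lemma mem_sdiff_iff_insTime_eq {n T : ℕ} {S : ℕ → Finset (Fin n)} (h : IsChainGIK T S)
    {t : ℕ} (ht : t ∈ Finset.Icc 1 T) (i : Fin n) :
    i ∈ S t \ S (t - 1) ↔ insTime T S i = t := by
  have ht' := Finset.mem_Icc.1 ht
  rw [Finset.mem_sdiff, mem_iff_insTime_le h ht'.2, mem_iff_insTime_le h (by omega)]
  omega

lemma chainProfit_eq {n T : ℕ} (p : Fin n → ℕ → ℝ) {S : ℕ → Finset (Fin n)}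
    (h : IsChainGIK T S) :
    chainProfit T p S =
      ∑ i, if insTime T S i ∈ Finset.Icc 1 T then p i (insTime T S i) else 0 := by
  have h1 : chainProfit T p S =
      ∑ t ∈ Finset.Icc 1 T, ∑ i, if insTime T S i = t then p i t else 0 := by
    refine Finset.sum_congr rfl fun t ht => ?_
    rw [← Finset.sum_filter]
    refine Finset.sum_congr ?_ fun _ _ => rfl
    ext i
    rw [mem_sdiff_iff_insTime_eq h ht]
    simp
  rw [h1, Finset.sum_comm]
  exact Finset.sum_congr rfl fun i _ => Finset.sum_ite_eq _ _ _

/-- In an order respecting insertion times, each item earns at least its profit in the chain: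
everything scheduled up to `i` lies in `S t` for `t` the insertion time of `i`. -/
lemma le_itemProfit_insTime {n T : ℕ} {w : Fin n → ℝ} {W : ℕ → ℝ} (p : Fin n → ℕ → ℝ)
    (hw : ∀ i, 0 < w i) {S : ℕ → Finset (Fin n)} (hS : FeasibleChain T w W S)
    {π : Fin n → ℕ} (hπ : ∀ i j : Fin n, insTime T S i < insTime T S j → π i < π j)
    (i : Fin n) :
    (if insTime T S i ∈ Finset.Icc 1 T then p i (insTime T S i) else 0) ≤
      itemProfit T w W p Finset.univ π i := by
  split_ifs with ht
  · have hcomp : comp w Finset.univ π i ≤ W (insTime T S i) := by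
      refine le_trans (Finset.sum_le_sum_of_subset_of_nonneg ?_ fun j _ _ => (hw j).le)
        (hS.2 _ ht)
      intro j hj
      rw [mem_iff_insTime_le hS.1 (Finset.mem_Icc.1 ht).2]
      by_contra! hlt
      exact absurd (Finset.mem_filter.1 hj).2 (not_le.2 (hπ i j hlt))
    exact Finset.le_max' _ _ (Finset.mem_insert_of_mem
      (Finset.mem_image.2 ⟨_, Finset.mem_filter.2 ⟨ht, hcomp⟩, rfl⟩))
  · exact Finset.le_max' _ _ (Finset.mem_insert_self _ _)

/-- Items can be ordered by any key; ties are broken by index. -/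
lemma exists_isPerm_of_key {n : ℕ} (f : Fin n → ℕ) :
    ∃ π : Fin n → ℕ, IsPerm Finset.univ π ∧ ∀ i j : Fin n, f i < f j → π i < π j := by
  let key : Fin n → ℕ ×ₗ Fin n := fun i => toLex (f i, i)
  -- the rank of `i`, counting from 1 since `i` itself is included
  let π : Fin n → ℕ := fun i => (Finset.univ.filter fun j => key j ≤ key i).card
  have hlt : ∀ i j, key i < key j → π i < π j := fun i j hij => by
    refine Finset.card_lt_card (Finset.ssubset_iff_of_subset ?_ |>.2 ⟨j, ?_, ?_⟩)
    · intro k hk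
      simp only [Finset.mem_filter, Finset.mem_univ, true_and] at hk ⊢
      exact hk.trans hij.le
    · simp
    · simpa using hij
  have hinj : Function.Injective π := by
    intro i j hij
    rcases lt_trichotomy (key i) (key j) with h | h | h
    · exact absurd hij (hlt i j h).ne
    · exact congrArg (fun x => (ofLex x).2) h
    · exact absurd hij (hlt j i h).ne'
  have hmaps : ∀ i ∈ (Finset.univ : Finset (Fin n)),
      π i ∈ Finset.Icc 1 (Finset.univ : Finset (Fin n)).card := fun i _ =>
    Finset.mem_Icc.2 ⟨Finset.card_pos.2 ⟨i, by simp⟩, Finset.card_le_univ _⟩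
  refine ⟨π, ⟨hmaps, hinj.injOn, ?_⟩, fun i j hij => hlt i j ?_⟩
  · exact Finset.surjOn_of_injOn_of_card_le π hmaps hinj.injOn (by simp)
  · exact Prod.Lex.toLex_lt_toLex.2 (Or.inl hij)

end GIK

open GIK Finset in
theorem stmt0 {n T : ℕ} (w : Fin n → ℝ) (W : ℕ → ℝ) (p : Fin n → ℕ → ℝ)
    (hw : ∀ i, 0 < w i) (hp : ∀ i t, 0 ≤ p i t)
    (hW0 : ∀ t ∈ Finset.Icc 1 T, 0 ≤ W t)
    (hWmono : ∀ s ∈ Finset.Icc 1 T, ∀ t ∈ Finset.Icc 1 T, s ≤ t → W s ≤ W t)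
    (S : ℕ → Finset (Fin n)) (hS : FeasibleChain T w W S) :
    (∀ π : Fin n → ℕ, IsPerm Finset.univ π →
      (∀ i j : Fin n, insTime T S i < insTime T S j → π i < π j) →
      chainProfit T p S ≤ permProfit T w W p Finset.univ π) ∧
    ∃ π : Fin n → ℕ, IsPerm Finset.univ π ∧
      chainProfit T p S ≤ permProfit T w W p Finset.univ π := by
  have key : ∀ π : Fin n → ℕ,
      (∀ i j : Fin n, insTime T S i < insTime T S j → π i < π j) →
      chainProfit T p S ≤ permProfit T w W p Finset.univ π := fun π hπ => by
    rw [chainProfit_eq p hS.1]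
    exact Finset.sum_le_sum fun i _ => le_itemProfit_insTime p hw hS hπ i
  refine ⟨fun π _ hπ => key π hπ, ?_⟩
  obtain ⟨π, hperm, hπ⟩ := exists_isPerm_of_key (insTime T S)
  exact ⟨π, hperm, key π hπ⟩
end
end

section
/- For every subset Q ⊆ N and every bijection π : Q → {1,…,|Q|}, there exists a feasible chain S with Φ(S) = Ψ(π). -/
/-!
Every item `i` attains its profit `φ_π(i)` at some period `τ i ∈ {1, …, T + 1}` whose capacity is
at least `C_π(i)`, where `T + 1` means that `i` is never inserted, with profit `0`
(`GIK.exists_insertion_period`). The chain inserts each item of `Q` at that period: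
`S t = {i ∈ Q | τ i ≤ t}`, so that `Φ(S) = Ψ(π)` by exchanging the two sums. For feasibility at
`t ≤ T`, let `i` be the `π`-last item of `S t`. All of `S t` precedes `i` in `π`, hence
`w(S t) ≤ C_π(i) ≤ W (τ i) ≤ W t`.
-/

open Finset

noncomputable section
open scoped Classical

/-- A period `t ≥ 1` realizing the maximum that defines `φ_π(i)`; any `t > T` plays the role of the
fictitious period of infinite capacity, and then the maximum is the inserted `0`. -/
theorem GIK.exists_insertion_period {n : ℕ} (T : ℕ) (w : Fin n → ℝ) (W : ℕ → ℝ)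
    (p : Fin n → ℕ → ℝ) (Q : Finset (Fin n)) (π : Fin n → ℕ) (i : Fin n) :
    ∃ t : ℕ, 1 ≤ t ∧ (t ≤ T → GIK.comp w Q π i ≤ W t) ∧
      GIK.itemProfit T w W p Q π i = if t ∈ Finset.Icc 1 T then p i t else 0 := by
  have h := Finset.max'_mem (insert (0 : ℝ)
      (((Finset.Icc 1 T).filter (fun t => GIK.comp w Q π i ≤ W t)).image (fun t => p i t)))
      (Finset.insert_nonempty _ _)
  change GIK.itemProfit T w W p Q π i ∈ _ at h
  rcases Finset.mem_insert.mp h with h | h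
  · refine ⟨T + 1, by omega, by omega, ?_⟩
    rw [h, if_neg (by simp)]
  · obtain ⟨t, ht, hpt⟩ := Finset.mem_image.mp h
    obtain ⟨htT, hc⟩ := Finset.mem_filter.mp ht
    exact ⟨t, (Finset.mem_Icc.mp htT).1, fun _ => hc, by rw [if_pos htT, hpt]⟩

open GIK Finset in
theorem stmt1 {n T : ℕ} (w : Fin n → ℝ) (W : ℕ → ℝ) (p : Fin n → ℕ → ℝ)
    (hw : ∀ i, 0 < w i) (hp : ∀ i t, 0 ≤ p i t)
    (hW0 : ∀ t ∈ Finset.Icc 1 T, 0 ≤ W t)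
    (hWmono : ∀ s ∈ Finset.Icc 1 T, ∀ t ∈ Finset.Icc 1 T, s ≤ t → W s ≤ W t)
    (Q : Finset (Fin n)) (π : Fin n → ℕ) (hπ : IsPerm Q π) :
    ∃ S : ℕ → Finset (Fin n), FeasibleChain T w W S ∧
      chainProfit T p S = permProfit T w W p Q π := by
  choose τ hτ1 hτW hτp using GIK.exists_insertion_period T w W p Q π
  refine ⟨fun t => Q.filter (fun i => τ i ≤ t), ⟨⟨?_, ?_⟩, ?_⟩, ?_⟩
  · ext i
    have := hτ1 i
    simp only [Finset.mem_filter, Finset.notMem_empty, iff_false]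
    omega
  · intro t _ i hi
    simp only [Finset.mem_filter] at hi ⊢
    exact ⟨hi.1, by omega⟩
  · intro t ht
    rcases (Q.filter (fun i => τ i ≤ t)).eq_empty_or_nonempty with h | h
    · simpa [h] using hW0 t ht
    · obtain ⟨i, hi, hmax⟩ := Finset.exists_max_image _ π h
      have hit : τ i ≤ t := (Finset.mem_filter.mp hi).2
      have htT : t ≤ T := (Finset.mem_Icc.mp ht).2
      calc ∑ j ∈ Q.filter (fun j => τ j ≤ t), w j
          ≤ comp w Q π i := by
            refine Finset.sum_le_sum_of_subset_of_nonneg (fun j hj => ?_)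
              (fun j _ _ => (hw j).le)
            exact Finset.mem_filter.mpr ⟨(Finset.mem_filter.mp hj).1, hmax j hj⟩
        _ ≤ W (τ i) := hτW i (hit.trans htT)
        _ ≤ W t := hWmono _ (Finset.mem_Icc.mpr ⟨hτ1 i, hit.trans htT⟩) t ht hit
  · have hnew : ∀ t ∈ Finset.Icc 1 T,
        Q.filter (fun i => τ i ≤ t) \ Q.filter (fun i => τ i ≤ t - 1)
          = Q.filter (fun i => t = τ i) := by
      intro t ht
      have := (Finset.mem_Icc.mp ht).1
      ext i
      simp only [Finset.mem_sdiff, Finset.mem_filter, not_and]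
      constructor
      · rintro ⟨⟨hQ, h1⟩, h2⟩
        have := h2 hQ
        exact ⟨hQ, by omega⟩
      · rintro ⟨hQ, h1⟩
        exact ⟨⟨hQ, by omega⟩, fun _ => by omega⟩
    calc chainProfit T p (fun t => Q.filter (fun i => τ i ≤ t))
        = ∑ t ∈ Finset.Icc 1 T, ∑ i ∈ Q, if t = τ i then p i t else 0 := by
          refine Finset.sum_congr rfl fun t ht => ?_
          rw [← Finset.sum_filter, ← hnew t ht]
      _ = ∑ i ∈ Q, ∑ t ∈ Finset.Icc 1 T, if t = τ i then p i t else 0 := Finset.sum_comm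
      _ = permProfit T w W p Q π := by
          refine Finset.sum_congr rfl fun i _ => ?_
          rw [hτp i, Finset.sum_ite_eq']
end
end

section
/- For every bijection π* : N → {1,…,n}, there exist a subset S ⊆ N and a bijection π : S → {1,…,|S|} such that (S, π) is bulky and Σ_{i∈S} φ_π(i) ≥ Ψ_heavy(π*). -/
/-!
Keep exactly the items that are heavy for the interval containing their completion time, in the
order given by `πs`. Dropping items can only decrease completion times (`comp_restrict_le`), so
the profit of each kept item does not decrease, and its completion time can only move to an interval
of smaller or equal index (`inInterval_le`), where heaviness is a weaker requirement. The intervals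
are disjoint, so `psiHeavy` counts every kept item once.
-/

open Finset

noncomputable section
open scoped Classical

namespace GIK

/-- The permutation of `S` induced by the order of `πs`: the rank of `i` among the items
of `S`. -/
def rankIn {n : ℕ} (S : Finset (Fin n)) (πs : Fin n → ℕ) (i : Fin n) : ℕ :=
  (S.filter (fun j => πs j ≤ πs i)).card

lemma rankIn_le_iff {n : ℕ} {S : Finset (Fin n)} {πs : Fin n → ℕ} {i j : Fin n} (hj : j ∈ S) :
    rankIn S πs j ≤ rankIn S πs i ↔ πs j ≤ πs i := by
  constructor
  · intro h
    by_contra! hlt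
    refine absurd h (not_le.2 (Finset.card_lt_card ?_))
    refine (Finset.ssubset_iff_of_subset ?_).2 ⟨j, by simp [hj], by simp [hlt]⟩
    intro x hx
    simp only [Finset.mem_filter] at hx ⊢
    exact ⟨hx.1, hx.2.trans hlt.le⟩
  · intro h
    apply Finset.card_le_card
    intro x hx
    simp only [Finset.mem_filter] at hx ⊢
    exact ⟨hx.1, hx.2.trans h⟩

lemma isPerm_rankIn {n : ℕ} (S : Finset (Fin n)) {πs : Fin n → ℕ} (hπs : Function.Injective πs) :
    IsPerm S (rankIn S πs) := by
  have hmaps : Set.MapsTo (rankIn S πs) (S : Set (Fin n)) (Finset.Icc 1 S.card : Finset ℕ) := by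
    intro i hi
    have hi' : i ∈ S := hi
    simp only [Finset.coe_Icc, Set.mem_Icc]
    exact ⟨Finset.card_pos.2 ⟨i, by simp [hi']⟩, Finset.card_le_card (Finset.filter_subset _ _)⟩
  have hinj : Set.InjOn (rankIn S πs) (S : Set (Fin n)) := fun i hi j hj h =>
    hπs (le_antisymm ((rankIn_le_iff hi).1 h.le) ((rankIn_le_iff hj).1 h.ge))
  exact ⟨hmaps, hinj, Finset.surjOn_of_injOn_of_card_le _ hmaps hinj (by simp)⟩

lemma comp_restrict_le {n : ℕ} {w : Fin n → ℝ} (hw : ∀ i, 0 < w i) (S : Finset (Fin n))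
    (πs : Fin n → ℕ) (i : Fin n) :
    comp w S (rankIn S πs) i ≤ comp w Finset.univ πs i := by
  unfold comp
  refine Finset.sum_le_sum_of_subset_of_nonneg ?_ fun j _ _ => (hw j).le
  intro j hj
  rw [Finset.mem_filter] at hj ⊢
  exact ⟨Finset.mem_univ j, (rankIn_le_iff hj.1).1 hj.2⟩

lemma itemProfit_mono {n T : ℕ} {w : Fin n → ℝ} {W : ℕ → ℝ} {p : Fin n → ℕ → ℝ}
    {Q Q' : Finset (Fin n)} {π π' : Fin n → ℕ} {i : Fin n}
    (h : comp w Q' π' i ≤ comp w Q π i) :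
    itemProfit T w W p Q π i ≤ itemProfit T w W p Q' π' i := by
  unfold itemProfit
  apply Finset.max'_subset
  apply Finset.insert_subset_insert
  apply Finset.image_subset_image
  intro t ht
  rw [Finset.mem_filter] at ht ⊢
  exact ⟨ht.1, h.trans ht.2⟩

lemma inInterval_le {ε : ℝ} (hε : 0 < ε) {k k' : ℕ} {x x' : ℝ} (hx : inInterval ε k x)
    (hx' : inInterval ε k' x') (h : x' ≤ x) : k' ≤ k := by
  by_contra! hlt
  have hup : x ≤ (1 + ε) ^ k := by
    unfold inInterval at hx
    split_ifs at hx with h0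
    · simpa [h0] using hx.2
    · exact hx.2
  have hlow : (1 + ε) ^ (k' - 1) < x' := by
    unfold inInterval at hx'
    rw [if_neg (by omega)] at hx'
    exact hx'.1
  have hpow : (1 + ε) ^ k ≤ (1 + ε) ^ (k' - 1) :=
    pow_le_pow_right₀ (by linarith) (by omega)
  linarith

lemma Heavy.anti {n : ℕ} {w : Fin n → ℝ} {ε : ℝ} (hε : 0 < ε) {k k' : ℕ} {i : Fin n}
    (h : Heavy w ε k i) (hk : k' ≤ k) : Heavy w ε k' i := by
  unfold Heavy at h ⊢
  refine le_trans ?_ h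
  gcongr
  linarith

end GIK

open GIK Finset in
theorem stmt2 {n T : ℕ} (w : Fin n → ℝ) (W : ℕ → ℝ) (p : Fin n → ℕ → ℝ)
    (hw : ∀ i, 0 < w i) (hp : ∀ i t, 0 ≤ p i t)
    (hW0 : ∀ t ∈ Finset.Icc 1 T, 0 ≤ W t)
    (hWmono : ∀ s ∈ Finset.Icc 1 T, ∀ t ∈ Finset.Icc 1 T, s ≤ t → W s ≤ W t)
    (ε : ℝ) (hε : ε ∈ Set.Ioo (0 : ℝ) (1/2))
    (πs : Fin n → ℕ) (hπs : IsPerm Finset.univ πs) :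
    ∃ (S : Finset (Fin n)) (π : Fin n → ℕ), Bulky w ε S π ∧
      psiHeavy T w W p ε πs ≤ ∑ i ∈ S, itemProfit T w W p S π i := by
  obtain ⟨hε0, -⟩ := hε
  have hinj : Function.Injective πs := fun i j h => hπs.injOn (by simp) (by simp) h
  set A : ℕ → Finset (Fin n) := fun k => Finset.univ.filter
    (fun i : Fin n => Heavy w ε k i ∧ inInterval ε k (comp w Finset.univ πs i)) with hA
  set S := (Finset.range (Kof w ε + 1)).biUnion A with hS
  refine ⟨S, rankIn S πs, ⟨isPerm_rankIn S hinj, ?_⟩, ?_⟩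
  · intro k' _ i hi hik'
    obtain ⟨k, -, hik⟩ := Finset.mem_biUnion.1 hi
    obtain ⟨hheavy, hik⟩ := (Finset.mem_filter.1 hik).2
    exact hheavy.anti hε0 (inInterval_le hε0 hik hik' (comp_restrict_le hw S πs i))
  · have hdisj : Set.PairwiseDisjoint (↑(Finset.range (Kof w ε + 1))) A := by
      intro k _ k' _ hne
      refine Finset.disjoint_left.2 fun i hi hi' => hne ?_
      have h := (Finset.mem_filter.1 hi).2.2
      have h' := (Finset.mem_filter.1 hi').2.2
      exact le_antisymm (inInterval_le hε0 h' h le_rfl) (inInterval_le hε0 h h' le_rfl)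
    calc psiHeavy T w W p ε πs = ∑ i ∈ S, itemProfit T w W p Finset.univ πs i :=
          (Finset.sum_biUnion hdisj).symm
      _ ≤ _ := Finset.sum_le_sum fun i _ => itemProfit_mono (comp_restrict_le hw S πs i)
end
end

section
/- Suppose additionally that 1/ε is a positive integer. Then for every bulky pair (S, π) and every k ∈ {1,…,K}, the number of items of S whose completion time falls in the interval I_k is at most 1/ε, i.e., |{i ∈ S : C_π(i) ∈ I_k}| ≤ 1/ε. -/
/-!
Order the items completing in `I_k` by position. Every such item except the first one `a` is
processed after `a` completes and no later than the last one `b` completes, so together these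
items weigh at most `C_π(b) - C_π(a) < (1+ε)^k - (1+ε)^(k-1) = ε (1+ε)^(k-1)`. Each of them weighs
at least `ε² (1+ε)^k`, so there are fewer than `1 / (ε (1+ε)) < 1/ε = m` of them. As `m` is an
integer, adding `a` back gives at most `m` items.
-/

open Finset

noncomputable section
open scoped Classical

open GIK Finset in
/-- The items of `F` other than its earliest member `a` are all processed in the time window
between the completions of `a` and of the latest member `b`. -/
lemma sum_erase_add_comp_le {n : ℕ} (w : Fin n → ℝ) (hw : ∀ i, 0 < w i)
    (S F : Finset (Fin n)) (π : Fin n → ℕ) (hinj : Set.InjOn π ↑S) (hFS : F ⊆ S)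
    (a b : Fin n) (ha : a ∈ F) (hb : b ∈ F)
    (hmin : ∀ j ∈ F, π a ≤ π j) (hmax : ∀ j ∈ F, π j ≤ π b) :
    ∑ j ∈ F.erase a, w j + comp w S π a ≤ comp w S π b := by
  unfold comp
  have hdisj : Disjoint (F.erase a) (S.filter (fun j => π j ≤ π a)) := by
    rw [Finset.disjoint_left]
    intro j hj hj'
    have hjF := Finset.mem_of_mem_erase hj
    exact Finset.ne_of_mem_erase hj (hinj (hFS hjF) (hFS ha)
      (le_antisymm (Finset.mem_filter.1 hj').2 (hmin j hjF)))
  rw [← Finset.sum_union hdisj]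
  refine Finset.sum_le_sum_of_subset_of_nonneg ?_ (fun i _ _ => (hw i).le)
  intro j hj
  rcases Finset.mem_union.1 hj with h | h
  · have hjF := Finset.mem_of_mem_erase h
    exact Finset.mem_filter.2 ⟨hFS hjF, hmax j hjF⟩
  · have h := Finset.mem_filter.1 h
    exact Finset.mem_filter.2 ⟨h.1, h.2.trans (hmin b hb)⟩

open GIK Finset in
theorem stmt3 {n : ℕ} (w : Fin n → ℝ) (hw : ∀ i, 0 < w i)
    (ε : ℝ) (hε : ε ∈ Set.Ioo (0 : ℝ) (1/2)) (hεinv : ∃ m : ℕ, 0 < m ∧ ε = 1 / (m : ℝ))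
    (S : Finset (Fin n)) (π : Fin n → ℕ) (hbulky : Bulky w ε S π)
    (k : ℕ) (hk : k ∈ Finset.Icc 1 (Kof w ε)) :
    ((S.filter (fun i => inInterval ε k (comp w S π i))).card : ℝ) ≤ 1 / ε := by
  obtain ⟨⟨-, hinj, -⟩, hheavy⟩ := hbulky
  obtain ⟨hε0, -⟩ := hε
  obtain ⟨m, hm, hεm⟩ := hεinv
  obtain ⟨hk1, hkK⟩ := Finset.mem_Icc.1 hk
  have hmε : 1 / ε = (m : ℝ) := by rw [hεm, one_div_one_div]
  rw [hmε]
  set F := S.filter (fun i => inInterval ε k (comp w S π i)) with hF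
  have hmem : ∀ i ∈ F, i ∈ S ∧ inInterval ε k (comp w S π i) := fun i hi =>
    Finset.mem_filter.1 hi
  rcases F.eq_empty_or_nonempty with h0 | hne
  · simp [h0]
  obtain ⟨a, ha, hmin⟩ := Finset.exists_min_image F π hne
  obtain ⟨b, hb, hmax⟩ := Finset.exists_max_image F π hne
  have hsum := sum_erase_add_comp_le w hw S F π hinj (fun i hi => (hmem i hi).1)
    a b ha hb hmin hmax
  obtain ⟨l, rfl⟩ : ∃ l, k = l + 1 := ⟨k - 1, by omega⟩
  have hIa : (1 + ε) ^ l < comp w S π a := by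
    have h := (hmem a ha).2
    simp only [inInterval, Nat.succ_ne_zero, if_false, Nat.add_sub_cancel] at h
    exact h.1
  have hIb : comp w S π b ≤ (1 + ε) ^ (l + 1) := by
    have h := (hmem b hb).2
    simp only [inInterval, Nat.succ_ne_zero, if_false] at h
    exact h.2
  have hcard : ((F.erase a).card : ℝ) * (ε ^ 2 * (1 + ε) ^ (l + 1)) ≤ ∑ j ∈ F.erase a, w j := by
    rw [← nsmul_eq_mul]
    refine Finset.card_nsmul_le_sum _ _ _ fun j hj => ?_
    have hj := hmem j (Finset.mem_of_mem_erase hj)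
    exact hheavy (l + 1) (Finset.mem_range.2 (by omega)) j hj.1 hj.2
  have hlt : ((F.erase a).card : ℝ) < m := by
    have hpos : 0 < ε * (1 + ε) ^ l := by positivity
    have hc : (0 : ℝ) ≤ (F.erase a).card := Nat.cast_nonneg _
    rw [pow_succ (1 + ε) l] at hcard hIb
    have h1 : ((F.erase a).card : ℝ) * (ε * (1 + ε)) * (ε * (1 + ε) ^ l)
        < 1 * (ε * (1 + ε) ^ l) := by
      nlinarith
    have h2 := lt_of_mul_lt_mul_right h1 hpos.le
    rw [← hmε, lt_div_iff₀ hε0]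
    nlinarith [mul_nonneg hc (sq_nonneg ε)]
  have hnat : (F.erase a).card < m := by exact_mod_cast hlt
  have hpos := Finset.card_pos.2 hne
  rw [Finset.card_erase_of_mem ha] at hnat
  exact_mod_cast (by omega : F.card ≤ m)
end
end

section
/- For every IP-feasible vector x, there exists a bijection π : N → {1,…,n} with Ψ(π) ≥ Σ_{k=1}^{K−1} Σ_{i∈L_{k+1}} q_{i,k}·x_{i,k}. -/
/-!
Process the items bucket by bucket: give each item the index of the first bucket it is assigned to
(unassigned items come last), and let `π` sort the items by this key. When an item of bucket `k` is
completed, only items of buckets `1, …, k` have been processed, so its completion time is at most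
`∑_{l ≤ k} capacity(B_l) = (1+ε)^k - 1 ≤ (1+ε)^k` (`comp_le_of_assigned`). Every period counted in
`q_{i,k}` is therefore available to the item, whose profit is at least `q_{i,k}`
(`qProfit_le_itemProfit`). Summing, with `∑_k x_{i,k} ≤ 1`, gives the claim.
-/

open Finset

noncomputable section
open scoped Classical

namespace GIK

/-- Any key `b` is sorted by some enumeration of the items by `1, …, n`. -/
lemma exists_isPerm_sorting {n : ℕ} (b : Fin n → ℕ) :
    ∃ π : Fin n → ℕ, IsPerm (Finset.univ : Finset (Fin n)) π ∧
      ∀ i j, π j ≤ π i → b j ≤ b i := by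
  refine ⟨fun i => ((Tuple.sort b).symm i : ℕ) + 1, ⟨?_, ?_, ?_⟩, ?_⟩
  · intro i _
    simp only [Finset.coe_Icc, Set.mem_Icc, Finset.card_univ, Fintype.card_fin]
    have := ((Tuple.sort b).symm i).isLt
    omega
  · intro i _ j _ h
    exact (Tuple.sort b).symm.injective (Fin.ext (Nat.succ_injective h))
  · intro m hm
    simp only [Finset.coe_Icc, Set.mem_Icc, Finset.card_univ, Fintype.card_fin] at hm
    refine ⟨Tuple.sort b ⟨m - 1, by omega⟩, by simp, ?_⟩
    simp only [Equiv.symm_apply_apply]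
    omega
  · intro i j h
    have h' : (Tuple.sort b).symm j ≤ (Tuple.sort b).symm i := Fin.le_def.2 (by simpa using h)
    simpa using Tuple.monotone_sort b h'

lemma sum_bucketCap (ε : ℝ) (k : ℕ) :
    ∑ l ∈ Finset.Icc 1 k, bucketCap ε l = (1 + ε) ^ k - 1 := by
  induction k with
  | zero => simp
  | succ k ih =>
    rw [Finset.sum_Icc_succ_top (by omega), ih, bucketCap]
    simp

/-- `x` assigns item `i` to bucket `k`, for an admissible pair `(i, k)`. -/
def Assigned {n : ℕ} (w : Fin n → ℝ) (ε : ℝ) (x : Fin n → ℕ → ℝ) (i : Fin n) (k : ℕ) : Prop :=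
  k ∈ Finset.Icc 1 (Kof w ε - 1) ∧ ¬ Heavy w ε (k + 1) i ∧ x i k = 1

/-- The first bucket to which item `i` is assigned. Unassigned items get the key `K`, which exceeds
every bucket index. -/
def bucketKey {n : ℕ} (w : Fin n → ℝ) (ε : ℝ) (x : Fin n → ℕ → ℝ) (i : Fin n) : ℕ :=
  sInf {k | Assigned w ε x i k ∨ k = Kof w ε}

lemma bucketKey_le {n : ℕ} {w : Fin n → ℝ} {ε : ℝ} {x : Fin n → ℕ → ℝ} {i : Fin n} {k : ℕ}
    (h : Assigned w ε x i k) : bucketKey w ε x i ≤ k :=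
  Nat.sInf_le (Or.inl h)

lemma assigned_bucketKey {n : ℕ} {w : Fin n → ℝ} {ε : ℝ} {x : Fin n → ℕ → ℝ} {i : Fin n}
    (h : bucketKey w ε x i < Kof w ε) : Assigned w ε x i (bucketKey w ε x i) := by
  have hmem : bucketKey w ε x i ∈ {k | Assigned w ε x i k ∨ k = Kof w ε} :=
    Nat.sInf_mem ⟨_, Or.inr rfl⟩
  exact hmem.resolve_right h.ne

/-- If the items are processed in order of their buckets, an item assigned to bucket `k` is
completed by time `(1+ε)^k`: everything before it fits into the buckets `1, …, k`. -/
lemma comp_le_of_assigned {n : ℕ} {w : Fin n → ℝ} (hw : ∀ i, 0 < w i) {ε : ℝ}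
    {x : Fin n → ℕ → ℝ} (hx : LPfeasible w ε x) {π : Fin n → ℕ}
    (hπ : ∀ i j, π j ≤ π i → bucketKey w ε x j ≤ bucketKey w ε x i)
    {i : Fin n} {k : ℕ} (hik : Assigned w ε x i k) :
    comp w Finset.univ π i ≤ (1 + ε) ^ k := by
  obtain ⟨hx0, -, hxcap⟩ := hx
  have hk := Finset.mem_Icc.1 hik.1
  have hmem : ∀ l ∈ Finset.Icc 1 k, l ∈ Finset.Icc 1 (Kof w ε - 1) := fun l hl => by
    rw [Finset.mem_Icc] at hl ⊢
    omega
  have hterm : ∀ j, ∀ l ∈ Finset.Icc 1 k,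
      0 ≤ if ¬ Heavy w ε (l + 1) j then w j * x j l else 0 := fun j l hl => by
    split_ifs with h
    · exact le_rfl
    · exact mul_nonneg (hw j).le (hx0 j l (hmem l hl) h)
  calc comp w Finset.univ π i
      ≤ ∑ j, ∑ l ∈ Finset.Icc 1 k, if ¬ Heavy w ε (l + 1) j then w j * x j l else 0 := by
        unfold comp
        rw [Finset.sum_filter]
        refine Finset.sum_le_sum fun j _ => ?_
        split_ifs with hj
        · have hjk : bucketKey w ε x j ≤ k := (hπ i j hj).trans (bucketKey_le hik)
          obtain ⟨h1, h2, h3⟩ := assigned_bucketKey (w := w) (ε := ε) (x := x) (i := j) (by omega)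
          have hl : bucketKey w ε x j ∈ Finset.Icc 1 k :=
            Finset.mem_Icc.2 ⟨(Finset.mem_Icc.1 h1).1, hjk⟩
          have := Finset.single_le_sum (hterm j) hl
          rwa [if_pos h2, h3, mul_one] at this
        · exact Finset.sum_nonneg (hterm j)
    _ = ∑ l ∈ Finset.Icc 1 k, ∑ j ∈ Finset.univ.filter (fun j : Fin n => ¬ Heavy w ε (l + 1) j),
          w j * x j l := by
        rw [Finset.sum_comm]
        exact Finset.sum_congr rfl fun l _ => (Finset.sum_filter _ _).symm
    _ ≤ ∑ l ∈ Finset.Icc 1 k, bucketCap ε l :=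
        Finset.sum_le_sum fun l hl => hxcap l (hmem l hl)
    _ ≤ (1 + ε) ^ k := by
        rw [sum_bucketCap]
        linarith

lemma qProfit_le_itemProfit {n T : ℕ} {w : Fin n → ℝ} {W : ℕ → ℝ} {p : Fin n → ℕ → ℝ} {ε : ℝ}
    {Q : Finset (Fin n)} {π : Fin n → ℕ} {i : Fin n} {k : ℕ}
    (h : comp w Q π i ≤ (1 + ε) ^ k) :
    qProfit T W p ε i k ≤ itemProfit T w W p Q π i := by
  unfold qProfit itemProfit
  refine Finset.max'_subset _ (Finset.insert_subset_insert _ (Finset.image_subset_image ?_))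
  exact Finset.monotone_filter_right _ fun t _ ht => h.trans ht

lemma itemProfit_nonneg {n T : ℕ} {w : Fin n → ℝ} {W : ℕ → ℝ} {p : Fin n → ℕ → ℝ}
    {Q : Finset (Fin n)} {π : Fin n → ℕ} {i : Fin n} :
    0 ≤ itemProfit T w W p Q π i :=
  Finset.le_max' _ _ (Finset.mem_insert_self _ _)

end GIK

open GIK Finset in
theorem stmt5 {n T : ℕ} (w : Fin n → ℝ) (W : ℕ → ℝ) (p : Fin n → ℕ → ℝ)
    (hw : ∀ i, 0 < w i) (hp : ∀ i t, 0 ≤ p i t)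
    (hW0 : ∀ t ∈ Finset.Icc 1 T, 0 ≤ W t)
    (hWmono : ∀ s ∈ Finset.Icc 1 T, ∀ t ∈ Finset.Icc 1 T, s ≤ t → W s ≤ W t)
    (ε : ℝ) (hε : ε ∈ Set.Ioo (0 : ℝ) (1/2))
    (x : Fin n → ℕ → ℝ) (hx : IPfeasible w ε x) :
    ∃ π : Fin n → ℕ, IsPerm (Finset.univ : Finset (Fin n)) π ∧
      assignProfit T w W p ε x ≤ permProfit T w W p Finset.univ π := by
  obtain ⟨hLP, hint⟩ := hx
  obtain ⟨π, hperm, hsort⟩ := exists_isPerm_sorting (bucketKey w ε x)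
  refine ⟨π, hperm, ?_⟩
  calc assignProfit T w W p ε x
      = ∑ i, ∑ k ∈ (Finset.Icc 1 (Kof w ε - 1)).filter (fun k => ¬ Heavy w ε (k + 1) i),
          qProfit T W p ε i k * x i k := by
        simp only [assignProfit, Finset.sum_filter]
        exact Finset.sum_comm
    _ ≤ permProfit T w W p Finset.univ π := by
        refine Finset.sum_le_sum fun i _ => ?_
        calc ∑ k ∈ (Finset.Icc 1 (Kof w ε - 1)).filter (fun k => ¬ Heavy w ε (k + 1) i),
              qProfit T W p ε i k * x i k
            ≤ ∑ k ∈ (Finset.Icc 1 (Kof w ε - 1)).filter (fun k => ¬ Heavy w ε (k + 1) i),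
                itemProfit T w W p Finset.univ π i * x i k := by
              refine Finset.sum_le_sum fun k hk => ?_
              obtain ⟨hk1, hk2⟩ := Finset.mem_filter.1 hk
              rcases hint i k hk1 hk2 with h0 | h1
              · simp [h0]
              · rw [h1, mul_one, mul_one]
                exact qProfit_le_itemProfit (comp_le_of_assigned hw hLP hsort ⟨hk1, hk2, h1⟩)
          _ ≤ itemProfit T w W p Finset.univ π i := by
              rw [← Finset.mul_sum]
              exact mul_le_of_le_one_right itemProfit_nonneg (hLP.2.1 i)
end
end

section
/- Let x̂ be an integral vector (x̂_{i,k} ∈ {0,1} for k ∈ {1,…,K−1} and i ∈ L_{k+1}) such that Σ_{k : i∈L_{k+1}} x̂_{i,k} ≤ 1 for every item i, and such that for every k with Σ_{i∈L_{k+1}} w_i·x̂_{i,k} > capacity(B_k) there exists an item i_k with x̂_{i_k,k} = 1 and Σ_{i∈L_{k+1}} w_i·x̂_{i,k} − w_{i_k} ≤ capacity(B_k). Then there exists an IP-feasible vector x⁻ with x⁻_{i,k} ≤ x̂_{i,k} for all i, k and Σ_{k=1}^{K−1} Σ_{i∈L_{k+1}} q_{i,k}·x⁻_{i,k} ≥ (1−8ε)·Σ_{k=1}^{K−1}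 Σ_{i∈L_{k+1}} q_{i,k}·x̂_{i,k}. -/
/-!
The buckets are treated separately. In an overfull bucket `B_k` the excess weight is at most the
weight of a single item, and an item of `L_{k+1}` weighs less than
`δ = ε² (1+ε)^(k+1) = ε (1+ε)² · capacity(B_k)`. Discarding items of lowest profit density until the
bucket fits therefore discards weight at most `2δ`, and the discarded set is no denser than the
whole bucket content, whose weight exceeds `capacity(B_k)`. Hence the discarded profit is at most a
fraction `2δ / capacity(B_k) = 2 ε (1+ε)² ≤ 8ε` of the profit of the bucket. The discarded set is
found in `exists_sparse_subset`, as a subset of minimal cardinality among those that are heavy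
enough and no denser than the whole.
-/


open Finset

noncomputable section
open scoped Classical

/-- A finite set with weights `a` (each at most `δ`) and profits `b` contains, for every
target `e ≥ 0` up to its total weight, a subset of weight in `[e, e + δ]` whose profit density is at most
that of the whole set. -/
lemma exists_sparse_subset {ι : Type*} [DecidableEq ι] (S : Finset ι) (a b : ι → ℝ) (δ e : ℝ)
    (hδ : 0 ≤ δ) (he : 0 ≤ e) (haδ : ∀ i ∈ S, a i ≤ δ) (heS : e ≤ ∑ i ∈ S, a i) :
    ∃ R ⊆ S, e ≤ ∑ i ∈ R, a i ∧ ∑ i ∈ R, a i ≤ e + δ ∧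
      (∑ i ∈ R, b i) * (∑ i ∈ S, a i) ≤ (∑ i ∈ R, a i) * (∑ i ∈ S, b i) := by
  obtain ⟨R, hR, hmin⟩ := Finset.exists_min_image
    (S.powerset.filter (fun R => e ≤ ∑ i ∈ R, a i ∧
      (∑ i ∈ R, b i) * (∑ i ∈ S, a i) ≤ (∑ i ∈ R, a i) * (∑ i ∈ S, b i)))
    Finset.card ⟨S, by simp [heS, mul_comm]⟩
  simp only [Finset.mem_filter, Finset.mem_powerset] at hR hmin
  obtain ⟨hRS, heR, hdens⟩ := hR
  refine ⟨R, hRS, heR, ?_, hdens⟩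
  by_contra! hlt
  have hpos : 0 < ∑ i ∈ R, a i := by linarith
  have hne : R.Nonempty := by
    rw [Finset.nonempty_iff_ne_empty]
    rintro rfl
    simp at hpos
  -- Some `j ∈ R` is at least as dense as `R`; deleting it does not increase the density.
  obtain ⟨j, hj, hjd⟩ : ∃ j ∈ R, a j * (∑ i ∈ R, b i) ≤ b j * ∑ i ∈ R, a i := by
    apply Finset.exists_le_of_sum_le hne
    rw [← Finset.sum_mul, ← Finset.sum_mul, mul_comm]
  have hae := Finset.sum_erase_add R a hj
  have hbe := Finset.sum_erase_add R b hj
  have hS : 0 ≤ ∑ i ∈ S, a i := he.trans heS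
  have haj := haδ j (hRS hj)
  have hcard := hmin (R.erase j) ⟨(Finset.erase_subset _ _).trans hRS, by linarith, by
    have ha' : ∑ i ∈ R.erase j, a i = ∑ i ∈ R, a i - a j := by linarith
    have hb' : ∑ i ∈ R.erase j, b i = ∑ i ∈ R, b i - b j := by linarith
    rw [ha', hb']
    refine le_of_mul_le_mul_right ?_ hpos
    have h1 := mul_le_mul_of_nonneg_right hjd hS
    have h2 := mul_le_mul_of_nonneg_left hdens
      (by linarith : 0 ≤ ∑ i ∈ R, a i - a j)
    nlinarith⟩
  have := Finset.card_erase_lt_of_mem hj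
  omega

/-- Repair of a single bucket of capacity `c`: `a i`, `b i` are the weight and profit that item `i`
contributes. Dropping a suitable set `D` makes the bucket fit and costs at most a fraction `8ε` of
its profit. -/
lemma exists_bucket_repair {ι : Type*} [DecidableEq ι] (L : Finset ι) (a b : ι → ℝ) (ε c : ℝ)
    (hε : ε ∈ Set.Ioo (0 : ℝ) (1/2)) (hc : 0 < c)
    (hb : ∀ i ∈ L, 0 ≤ b i) (haδ : ∀ i ∈ L, a i ≤ ε * (1 + ε) ^ 2 * c)
    (hex : c < ∑ i ∈ L, a i → ∑ i ∈ L, a i - c ≤ ε * (1 + ε) ^ 2 * c) :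
    ∃ D : Finset ι, ∑ i ∈ L, (if i ∈ D then 0 else a i) ≤ c ∧
      (1 - 8 * ε) * ∑ i ∈ L, b i ≤ ∑ i ∈ L, (if i ∈ D then 0 else b i) := by
  obtain ⟨h0, h1⟩ := hε
  have hB : 0 ≤ ∑ i ∈ L, b i := Finset.sum_nonneg hb
  rcases le_or_gt (∑ i ∈ L, a i) c with hle | hlt
  · exact ⟨∅, by simpa using hle, by simp only [Finset.notMem_empty, if_false]; nlinarith⟩
  have hδ : 0 ≤ ε * (1 + ε) ^ 2 * c := by positivity
  obtain ⟨D, hDL, hge, hDle, hdens⟩ := exists_sparse_subset L a b _ (∑ i ∈ L, a i - c) hδ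
    (by linarith) haδ (by linarith)
  have key : ∀ f : ι → ℝ,
      ∑ i ∈ L, (if i ∈ D then 0 else f i) = ∑ i ∈ L, f i - ∑ i ∈ D, f i := by
    intro f
    rw [← Finset.sum_sdiff hDL (f := f), add_sub_cancel_right, ← Finset.sum_sdiff hDL,
      Finset.sum_congr rfl (fun i hi => if_neg (Finset.mem_sdiff.1 hi).2),
      Finset.sum_eq_zero (s := D) (fun i hi => if_pos hi), add_zero]
  refine ⟨D, by rw [key]; linarith, ?_⟩
  rw [key]
  have hD : 0 ≤ ∑ i ∈ D, b i := Finset.sum_nonneg fun i hi => hb i (hDL hi)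
  have hex' := hex hlt
  have hsmall : ε * (1 + ε) ^ 2 ≤ 4 * ε := by
    have : (1 + ε) ^ 2 ≤ 4 := by nlinarith
    nlinarith
  have hwD : ∑ i ∈ D, a i ≤ 8 * ε * c := by
    have := mul_le_mul_of_nonneg_right hsmall hc.le
    linarith
  have hfin : ∑ i ∈ D, b i ≤ 8 * ε * ∑ i ∈ L, b i := by
    refine le_of_mul_le_mul_right ?_ hc
    calc (∑ i ∈ D, b i) * c ≤ (∑ i ∈ D, b i) * ∑ i ∈ L, a i :=
          mul_le_mul_of_nonneg_left hlt.le hD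
      _ ≤ (∑ i ∈ D, a i) * ∑ i ∈ L, b i := hdens
      _ ≤ (8 * ε * c) * ∑ i ∈ L, b i := mul_le_mul_of_nonneg_right hwD hB
      _ = 8 * ε * (∑ i ∈ L, b i) * c := by ring
  linarith

lemma qProfit_nonneg {n : ℕ} (T : ℕ) (W : ℕ → ℝ) (p : Fin n → ℕ → ℝ) (ε : ℝ) (i : Fin n)
    (k : ℕ) : 0 ≤ GIK.qProfit T W p ε i k :=
  Finset.le_max' _ _ (Finset.mem_insert_self _ _)

open GIK Finset in
theorem stmt7 {n T : ℕ} (w : Fin n → ℝ) (W : ℕ → ℝ) (p : Fin n → ℕ → ℝ)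
    (hw : ∀ i, 0 < w i) (hp : ∀ i t, 0 ≤ p i t)
    (hW0 : ∀ t ∈ Finset.Icc 1 T, 0 ≤ W t)
    (hWmono : ∀ s ∈ Finset.Icc 1 T, ∀ t ∈ Finset.Icc 1 T, s ≤ t → W s ≤ W t)
    (ε : ℝ) (hε : ε ∈ Set.Ioo (0 : ℝ) (1/2))
    (xh : Fin n → ℕ → ℝ)
    (hint : ∀ i : Fin n, ∀ k ∈ Finset.Icc 1 (Kof w ε - 1), ¬ Heavy w ε (k + 1) i →
      xh i k = 0 ∨ xh i k = 1)
    (hone : ∀ i : Fin n,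
      ∑ k ∈ (Finset.Icc 1 (Kof w ε - 1)).filter (fun k => ¬ Heavy w ε (k + 1) i),
        xh i k ≤ 1)
    (hfix : ∀ k ∈ Finset.Icc 1 (Kof w ε - 1),
      bucketCap ε k <
          ∑ i ∈ Finset.univ.filter (fun i : Fin n => ¬ Heavy w ε (k + 1) i), w i * xh i k →
      ∃ i₀ : Fin n, ¬ Heavy w ε (k + 1) i₀ ∧ xh i₀ k = 1 ∧
        (∑ i ∈ Finset.univ.filter (fun i : Fin n => ¬ Heavy w ε (k + 1) i), w i * xh i k)
          - w i₀ ≤ bucketCap ε k) :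
    ∃ xm : Fin n → ℕ → ℝ, IPfeasible w ε xm ∧
      (∀ i : Fin n, ∀ k ∈ Finset.Icc 1 (Kof w ε - 1), ¬ Heavy w ε (k + 1) i →
        xm i k ≤ xh i k) ∧
      (1 - 8 * ε) * assignProfit T w W p ε xh ≤ assignProfit T w W p ε xm := by
  have h0 := hε.1
  have hx : ∀ i : Fin n, ∀ k ∈ Finset.Icc 1 (Kof w ε - 1), ¬ Heavy w ε (k + 1) i →
      0 ≤ xh i k ∧ xh i k ≤ 1 := by
    intro i k hk hi
    rcases hint i k hk hi with h | h <;> simp [h]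
  have hbucket : ∀ k ∈ Finset.Icc 1 (Kof w ε - 1), ∃ D : Finset (Fin n),
      ∑ i ∈ Finset.univ.filter (fun i : Fin n => ¬ Heavy w ε (k + 1) i),
        (if i ∈ D then 0 else w i * xh i k) ≤ bucketCap ε k ∧
      (1 - 8 * ε) * ∑ i ∈ Finset.univ.filter (fun i : Fin n => ¬ Heavy w ε (k + 1) i),
        qProfit T W p ε i k * xh i k ≤
      ∑ i ∈ Finset.univ.filter (fun i : Fin n => ¬ Heavy w ε (k + 1) i),
        (if i ∈ D then 0 else qProfit T W p ε i k * xh i k) := by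
    intro k hk
    obtain ⟨m, rfl⟩ : ∃ m, k = m + 1 := ⟨k - 1, by have := (Finset.mem_Icc.1 hk).1; omega⟩
    have hcap : bucketCap ε (m + 1) = ε * (1 + ε) ^ m := by
      simp only [bucketCap, Nat.add_sub_cancel]
      ring
    have hlight : ∀ i : Fin n, ¬ Heavy w ε (m + 1 + 1) i →
        w i ≤ ε * (1 + ε) ^ 2 * bucketCap ε (m + 1) := by
      intro i hi
      rw [Heavy, not_le] at hi
      rw [hcap]
      exact hi.le.trans_eq (by ring)
    apply exists_bucket_repair _ _ _ ε _ hε (by rw [hcap]; positivity)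
    · intro i hi
      exact mul_nonneg (qProfit_nonneg _ _ _ _ _ _) (hx i _ hk (Finset.mem_filter.1 hi).2).1
    · intro i hi
      have hi' := (Finset.mem_filter.1 hi).2
      exact (mul_le_of_le_one_right (hw i).le (hx i _ hk hi').2).trans (hlight i hi')
    · intro hlt
      obtain ⟨i₀, hi₀, -, h⟩ := hfix _ hk hlt
      have := hlight i₀ hi₀
      linarith
  choose! D hDw hDq using hbucket
  have hle : ∀ i : Fin n, ∀ k ∈ Finset.Icc 1 (Kof w ε - 1), ¬ Heavy w ε (k + 1) i →
      (if i ∈ D k then 0 else xh i k) ≤ xh i k := by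
    intro i k hk hi
    split_ifs
    exacts [(hx i k hk hi).1, le_rfl]
  refine ⟨fun i k => if i ∈ D k then 0 else xh i k, ⟨⟨?_, ?_, ?_⟩, ?_⟩, hle, ?_⟩
  · intro i k hk hi
    dsimp only
    split_ifs
    exacts [le_rfl, (hx i k hk hi).1]
  · intro i
    refine (Finset.sum_le_sum fun k hk => ?_).trans (hone i)
    exact hle i k (Finset.mem_filter.1 hk).1 (Finset.mem_filter.1 hk).2
  · intro k hk
    simpa only [mul_ite, mul_zero] using hDw k hk
  · intro i k hk hi
    dsimp only
    split_ifs
    exacts [Or.inl rfl, hint i k hk hi]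
  · simp only [assignProfit, mul_ite, mul_zero]
    rw [Finset.mul_sum]
    exact Finset.sum_le_sum hDq
end
end

section
/- Let ε ∈ (0,1), cap > 0, and let q_1,…,q_M ≥ 0 and w_1,…,w_M > 0 satisfy: q_1/w_1 ≥ q_2/w_2 ≥ ⋯ ≥ q_M/w_M, w_m ≤ 4ε·cap for every m, and Σ_{m=1}^{M} w_m ≤ (1+4ε)·cap. Let μ be the largest index in {0,1,…,M} with Σ_{m=1}^{μ} w_m ≤ cap. Then Σ_{m=1}^{μ} q_m ≥ (1−8ε)·Σ_{m=1}^{M} q_m. -/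
/-!
If the whole list fits, `μ = M` and the claim is immediate. Otherwise let `d` be the density of the
first rejected item `μ + 1`. Kept items have density at least `d` and rejected ones at most `d`, so
with kept/rejected weights `P`, `R` and profits `A`, `B` one gets `d * P ≤ A` and `B ≤ d * R`, hence
`B * P ≤ A * R`: the lost share of the profit is at most the lost share `R / (P + R)` of the weight.
Maximality of `μ` gives `cap < P + w (μ + 1) ≤ P + 4 * ε * cap`, so `R ≤ 8 * ε * cap`, while
`P + R > cap`. Therefore the lost share is at most `8 * ε`.
-/

theorem density_antitone {M : ℕ} {q w : ℕ → ℝ}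
    (hsort : ∀ m ∈ Finset.Icc 1 M, m + 1 ≤ M → q (m + 1) / w (m + 1) ≤ q m / w m)
    {a b : ℕ} (ha : 1 ≤ a) (hab : a ≤ b) (hb : b ≤ M) : q b / w b ≤ q a / w a := by
  induction b, hab using Nat.le_induction with
  | base => exact le_rfl
  | succ n hn ih =>
    exact (hsort n (Finset.mem_Icc.2 ⟨by omega, by omega⟩) hb).trans (ih (by omega))

theorem sum_Icc_one_split (f : ℕ → ℝ) {μ M : ℕ} (h : μ ≤ M) :
    ∑ m ∈ Finset.Icc 1 M, f m = ∑ m ∈ Finset.Icc 1 μ, f m + ∑ m ∈ Finset.Ioc μ M, f m := by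
  have e : ∀ n, Finset.Icc 1 n = Finset.Ioc 0 n := fun n => by ext; simp; omega
  rw [e, e, Finset.sum_Ioc_consecutive f (Nat.zero_le _) h]

theorem stmt8 (M : ℕ) (ε cap : ℝ) (q w : ℕ → ℝ)
    (hε : ε ∈ Set.Ioo (0 : ℝ) 1) (hcap : 0 < cap)
    (hq : ∀ m ∈ Finset.Icc 1 M, 0 ≤ q m) (hw : ∀ m ∈ Finset.Icc 1 M, 0 < w m)
    (hsort : ∀ m ∈ Finset.Icc 1 M, m + 1 ≤ M → q (m + 1) / w (m + 1) ≤ q m / w m)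
    (hsmall : ∀ m ∈ Finset.Icc 1 M, w m ≤ 4 * ε * cap)
    (htot : ∑ m ∈ Finset.Icc 1 M, w m ≤ (1 + 4 * ε) * cap)
    (μ : ℕ) (hμM : μ ≤ M) (hμfit : ∑ m ∈ Finset.Icc 1 μ, w m ≤ cap)
    (hμmax : ∀ μ' ≤ M, ∑ m ∈ Finset.Icc 1 μ', w m ≤ cap → μ' ≤ μ) :
    (1 - 8 * ε) * ∑ m ∈ Finset.Icc 1 M, q m ≤ ∑ m ∈ Finset.Icc 1 μ, q m := by
  have hQ : 0 ≤ ∑ m ∈ Finset.Icc 1 M, q m := Finset.sum_nonneg hq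
  obtain ⟨hε0, -⟩ := hε
  rcases hμM.eq_or_lt with rfl | hlt
  · nlinarith [mul_nonneg hε0.le hQ]
  have hmem : μ + 1 ∈ Finset.Icc 1 M := Finset.mem_Icc.2 ⟨by omega, hlt⟩
  have hnext : cap < ∑ m ∈ Finset.Icc 1 μ, w m + w (μ + 1) := by
    rw [← Finset.sum_Icc_succ_top (by omega)]
    by_contra! h
    have := hμmax (μ + 1) hlt h
    omega
  have hover : cap < ∑ m ∈ Finset.Icc 1 M, w m := by
    by_contra! h
    have := hμmax M le_rfl h
    omega
  have hsm := hsmall _ hmem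
  have hA : q (μ + 1) / w (μ + 1) * ∑ m ∈ Finset.Icc 1 μ, w m ≤ ∑ m ∈ Finset.Icc 1 μ, q m := by
    rw [Finset.mul_sum]
    refine Finset.sum_le_sum fun m hm => ?_
    obtain ⟨h1, h2⟩ := Finset.mem_Icc.1 hm
    exact (le_div_iff₀ (hw m (Finset.mem_Icc.2 ⟨h1, by omega⟩))).1
      (density_antitone hsort h1 (by omega) hlt)
  have hB : ∑ m ∈ Finset.Ioc μ M, q m ≤ q (μ + 1) / w (μ + 1) * ∑ m ∈ Finset.Ioc μ M, w m := by
    rw [Finset.mul_sum]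
    refine Finset.sum_le_sum fun m hm => ?_
    obtain ⟨h1, h2⟩ := Finset.mem_Ioc.1 hm
    exact (div_le_iff₀ (hw m (Finset.mem_Icc.2 ⟨by omega, h2⟩))).1
      (density_antitone hsort (by omega) h1 h2)
  have hP : 0 ≤ ∑ m ∈ Finset.Icc 1 μ, w m := Finset.sum_nonneg fun m hm =>
    (hw m (Finset.Icc_subset_Icc_right hμM hm)).le
  have hR : 0 ≤ ∑ m ∈ Finset.Ioc μ M, w m := Finset.sum_nonneg fun m hm =>
    (hw m (Finset.mem_Icc.2 ⟨by have := Finset.mem_Ioc.1 hm; omega, (Finset.mem_Ioc.1 hm).2⟩)).le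
  rw [sum_Icc_one_split w hμM] at htot hover
  rw [sum_Icc_one_split q hμM] at hQ ⊢
  generalize ∑ m ∈ Finset.Icc 1 μ, w m = P at *
  generalize ∑ m ∈ Finset.Ioc μ M, w m = R at *
  generalize ∑ m ∈ Finset.Icc 1 μ, q m = A at *
  generalize ∑ m ∈ Finset.Ioc μ M, q m = B at *
  generalize q (μ + 1) / w (μ + 1) = d at *
  have hBP : B * P ≤ A * R := by
    nlinarith [mul_le_mul_of_nonneg_right hA hR, mul_le_mul_of_nonneg_right hB hP]
  have hR8 : R ≤ 8 * ε * (P + R) := by nlinarith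
  have hlost : B * (P + R) ≤ 8 * ε * (A + B) * (P + R) := by
    nlinarith [mul_le_mul_of_nonneg_left hR8 hQ]
  have := le_of_mul_le_mul_right hlost (hcap.trans hover)
  linarith
end

section
/- Let 𝒢 = (G_1,…,G_T) be a feasible chain for I = (N, W) and let ℛ = (R_1,…,R_T) be a feasible chain for the residual instance I^{−𝒢}. Then the componentwise union 𝒢∪ℛ = (G_1∪R_1, …, G_T∪R_T) is a feasible chain for I with profit Φ(𝒢∪ℛ) = Φ(𝒢) + Φ(ℛ). -/
/-! Every `R t` avoids `G T`, which contains every `G s`, so the sets `R t` and `G s` are disjoint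
for all `s, t ≤ T`. Hence weights add up over `G t ∪ R t`, and `resW t ≤ W t - w(G t)` (the term
`τ = t` of the minimum) gives the capacity bound. By the same disjointness, the items that the union
introduces in period `t` are the disjoint union of those introduced by `G` and by `R`, so profits
add up as well. -/

open Finset

noncomputable section
open scoped Classical

namespace GIK

lemma IsChainGIK.subset_last {n T : ℕ} {S : ℕ → Finset (Fin n)} (hS : IsChainGIK T S)
    {t : ℕ} (ht : t ≤ T) : S t ⊆ S T := by
  induction ht using Nat.decreasingInduction with
  | self => exact Finset.Subset.refl _
  | of_succ k hk ih => exact (hS.2 k hk).trans ih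

lemma resW_le {n T : ℕ} (w : Fin n → ℝ) (W : ℕ → ℝ) (G : ℕ → Finset (Fin n))
    {t : ℕ} (ht : t ≤ T) : resW T w W G t ≤ W t - ∑ i ∈ G t, w i := by
  have hmem : t ∈ Finset.Icc t T := Finset.mem_Icc.2 ⟨le_rfl, ht⟩
  rw [resW, dif_pos ⟨t, hmem⟩]
  exact Finset.inf'_le (fun τ => W τ - ∑ i ∈ G τ, w i) hmem

lemma ResFeasibleChain.disjoint {n T : ℕ} {w : Fin n → ℝ} {W : ℕ → ℝ}
    {G R : ℕ → Finset (Fin n)} (hG : IsChainGIK T G) (hR : ResFeasibleChain T w W G R)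
    {s t : ℕ} (hs : s ≤ T) (ht : t ≤ T) : Disjoint (G s) (R t) := by
  rcases Nat.eq_zero_or_pos t with rfl | h0
  · rw [hR.1.1]
    exact Finset.disjoint_empty_right _
  · exact ((hR.2.1 t (Finset.mem_Icc.2 ⟨h0, ht⟩)).mono_right (hG.subset_last hs)).symm

end GIK

open GIK Finset in
theorem stmt10 {n T : ℕ} (w : Fin n → ℝ) (W : ℕ → ℝ) (p : Fin n → ℕ → ℝ)
    (hw : ∀ i, 0 < w i)
    (G R : ℕ → Finset (Fin n))
    (hG : FeasibleChain T w W G) (hR : ResFeasibleChain T w W G R) :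
    FeasibleChain T w W (fun t => G t ∪ R t) ∧
      chainProfit T p (fun t => G t ∪ R t) = chainProfit T p G + chainProfit T p R := by
  have hdisj : ∀ s ≤ T, ∀ t ≤ T, Disjoint (G s) (R t) := fun s hs t ht =>
    hR.disjoint hG.1 hs ht
  refine ⟨⟨⟨?_, fun t ht => ?_⟩, fun t ht => ?_⟩, ?_⟩
  · simp [hG.1.1, hR.1.1]
  · exact Finset.union_subset_union (hG.1.2 t ht) (hR.1.2 t ht)
  · have htT := (Finset.mem_Icc.1 ht).2
    have h1 := hR.2.2 t ht
    have h2 := resW_le w W G htT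
    change ∑ i ∈ G t ∪ R t, w i ≤ W t
    rw [Finset.sum_union (hdisj t htT t htT)]
    linarith
  · unfold chainProfit
    rw [← Finset.sum_add_distrib]
    refine Finset.sum_congr rfl fun t ht => ?_
    have htT := (Finset.mem_Icc.1 ht).2
    have hpT : t - 1 ≤ T := (Nat.sub_le t 1).trans htT
    have hsplit : (G t ∪ R t) \ (G (t - 1) ∪ R (t - 1)) =
        (G t \ G (t - 1)) ∪ (R t \ R (t - 1)) := by
      ext i
      have h1 : i ∈ G t → _ := fun h => Finset.disjoint_left.1 (hdisj t htT (t - 1) hpT) h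
      have h2 : i ∈ G (t - 1) → _ := fun h => Finset.disjoint_left.1 (hdisj (t - 1) hpT t htT) h
      simp only [Finset.mem_sdiff, Finset.mem_union]
      tauto
    rw [← Finset.sum_union
      ((hdisj t htT t htT).mono Finset.sdiff_subset Finset.sdiff_subset), ← hsplit]
end
end

section
/- Assume n ≥ 2, min_{i∈N} w_i = 3, and that 1/ε is a positive integer; let ρ = (max_{i∈N} w_i)/(min_{i∈N} w_i). For every bijection π : N → {1,…,n}, the set G^heavy(π) = ∪_{k=0}^{K} {i ∈ H_k : C_π(i) ∈ I_k} of items that are heavy for the interval containing their completion time satisfies |G^heavy(π)| ≤ (2/ε)·⌈log_{1+ε}(n·ρ)⌉. -/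
/-!
Fix a position `k` on the geometric grid. If `F` is a set of `k`-heavy items whose completion times
all lie in `I_k`, then all members of `F` but the first one are processed entirely inside `I_k`, so
`(|F| - 1) ε² (1+ε)^k < ε (1+ε)^(k-1)` (`GIK.pred_card_mul_le_comp_sub`). With `ε = 1/m` this reads
`(|F| - 1)(m + 1) < m²`, which forces `|F| ≤ m = 1/ε` (`GIK.card_heavy_le`).

It remains to count the intervals that can contain a completion time. Every completion time lies
between the smallest weight `3` and `n · wmax = 3 · (n ρ)`, so the index `⌈log_{1+ε} C⌉` of its
interval takes at most `L + 1` values, where `L = ⌈log_{1+ε} (n ρ)⌉`. As `n ρ ≥ 2 > 1`, one has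
`L ≥ 1`, hence `L + 1 ≤ 2 L` and the total is at most `(1/ε)(L + 1) ≤ (2/ε) L`.
-/

open Finset

noncomputable section
open scoped Classical

namespace GIK

/-- If `F` is a nonempty set of items of weight at least `δ`, then some two completion times in `F`
differ by at least `(|F| - 1) δ`: between the first and the last member of `F`, all members but
the first one are processed. -/
lemma pred_card_mul_le_comp_sub {w : Fin n → ℝ} (hw : ∀ i, 0 < w i) {π : Fin n → ℕ}
    (hπ : Function.Injective π) {δ : ℝ} {F : Finset (Fin n)} (hF : F.Nonempty)
    (hδ : ∀ i ∈ F, δ ≤ w i) :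
    ∃ i ∈ F, ∃ j ∈ F, ((F.card : ℝ) - 1) * δ ≤ comp w univ π j - comp w univ π i := by
  obtain ⟨i, hi, himin⟩ := F.exists_min_image π hF
  obtain ⟨j, hj, hjmax⟩ := F.exists_max_image π hF
  refine ⟨i, hi, j, hj, ?_⟩
  have hdisj : Disjoint (F.erase i) (univ.filter fun l => π l ≤ π i) := by
    rw [Finset.disjoint_left]
    intro l hl hl'
    have h1 := himin l (mem_of_mem_erase hl)
    have h2 : π l ≤ π i := by simpa using hl'
    exact ne_of_mem_erase hl (hπ (le_antisymm h2 h1))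
  have hsub : F.erase i ∪ (univ.filter fun l => π l ≤ π i) ⊆ univ.filter fun l => π l ≤ π j := by
    intro l hl
    rw [mem_union, mem_filter] at hl
    rw [mem_filter]
    refine ⟨mem_univ _, ?_⟩
    rcases hl with hl | hl
    · exact hjmax l (mem_of_mem_erase hl)
    · exact hl.2.trans (himin j hj)
  have hle : ∑ l ∈ F.erase i ∪ (univ.filter fun l => π l ≤ π i), w l ≤ comp w univ π j :=
    sum_le_sum_of_subset_of_nonneg hsub fun l _ _ => (hw l).le
  rw [sum_union hdisj] at hle
  have hlow : ((F.erase i).card : ℝ) * δ ≤ ∑ l ∈ F.erase i, w l := by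
    rw [← nsmul_eq_mul]
    exact card_nsmul_le_sum _ _ _ fun l hl => hδ l (mem_of_mem_erase hl)
  rw [card_erase_of_mem hi, Nat.cast_sub hF.card_pos, Nat.cast_one] at hlow
  have hcomp : comp w univ π i = ∑ l ∈ univ.filter (fun l => π l ≤ π i), w l := rfl
  linarith

/-- At most `1/ε = m` items that are `k`-heavy complete inside `I_k`, for `k ≥ 1`. -/
lemma card_heavy_le {w : Fin n → ℝ} (hw : ∀ i, 0 < w i) {π : Fin n → ℕ}
    (hπ : Function.Injective π) {ε : ℝ} {m : ℕ} (hm : 0 < m) (hε : ε = 1 / (m : ℝ)) {k : ℕ}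
    (hk : k ≠ 0) {F : Finset (Fin n)}
    (hF : ∀ i ∈ F, Heavy w ε k i ∧ inInterval ε k (comp w univ π i)) : F.card ≤ m := by
  obtain rfl | hne := F.eq_empty_or_nonempty
  · simp
  obtain ⟨i, hi, j, hj, hij⟩ := pred_card_mul_le_comp_sub hw hπ hne fun i hi => (hF i hi).1
  obtain ⟨k, rfl⟩ := Nat.exists_eq_succ_of_ne_zero hk
  have hi' := (hF i hi).2
  have hj' := (hF j hj).2
  simp only [inInterval, Nat.succ_ne_zero, if_false, Nat.succ_eq_add_one, Nat.add_sub_cancel,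
    Set.mem_Ioc] at hi' hj'
  have hm' : (0 : ℝ) < m := by exact_mod_cast hm
  have hε0 : 0 < ε := by rw [hε]; positivity
  have hεm : ε * m = 1 := by rw [hε]; field_simp
  have hP : 0 < (1 + ε) ^ k := by positivity
  -- Divide `(|F| - 1) ε² (1+ε)^(k+1) < ε (1+ε)^k` by `ε (1+ε)^k`.
  have h1 : ((F.card : ℝ) - 1) * (ε * (1 + ε)) < 1 := by
    have h : (ε * (1 + ε) ^ k) * (((F.card : ℝ) - 1) * (ε * (1 + ε))) < (ε * (1 + ε) ^ k) * 1 := by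
      rw [Nat.succ_eq_add_one, pow_succ (1 + ε) k] at hij
      have := hj'.2
      rw [pow_succ] at this
      nlinarith [hi'.1]
    exact lt_of_mul_lt_mul_left h (by positivity)
  by_contra! hlt
  have hc : (m : ℝ) ≤ (F.card : ℝ) - 1 := by
    have : (m : ℝ) + 1 ≤ F.card := by exact_mod_cast hlt
    linarith
  -- `|F| > m` would make the left side of `h1` at least `m ε (1+ε) = 1 + ε`.
  have h2 := mul_le_mul_of_nonneg_right hc (by positivity : 0 ≤ ε * (1 + ε))
  nlinarith

/-- For `x > 1`, the index of the interval containing `x` is `⌈log_{1+ε} x⌉`. -/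
lemma ceil_logb_eq_of_inInterval {ε : ℝ} (hε : 0 < ε) {k : ℕ} {x : ℝ} (hx : 1 < x)
    (h : inInterval ε k x) : k ≠ 0 ∧ ⌈Real.logb (1 + ε) x⌉₊ = k := by
  have hk : k ≠ 0 := by
    rintro rfl
    rw [inInterval, if_pos rfl] at h
    exact absurd h.2 (not_le.2 hx)
  rw [inInterval, if_neg hk] at h
  refine ⟨hk, (Nat.ceil_eq_iff hk).2 ⟨?_, ?_⟩⟩
  · rw [Real.lt_logb_iff_rpow_lt (by linarith) (by linarith), Real.rpow_natCast]
    exact h.1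
  · rw [Real.logb_le_iff_le_rpow (by linarith) (by linarith), Real.rpow_natCast]
    exact h.2

end GIK

open GIK Finset in
theorem stmt12 {n : ℕ} (hn : 2 ≤ n) (w : Fin n → ℝ) (hw : ∀ i, 0 < w i)
    (ε : ℝ) (hε : ε ∈ Set.Ioo (0 : ℝ) (1/2)) (hεinv : ∃ m : ℕ, 0 < m ∧ ε = 1 / (m : ℝ))
    (hwmin : (∀ i, 3 ≤ w i) ∧ ∃ i, w i = 3)
    (wmax : ℝ) (hwmax : IsGreatest (Set.range w) wmax)
    (π : Fin n → ℕ) (hπ : IsPerm Finset.univ π) :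
    ((Finset.univ.filter (fun i : Fin n => ∃ k ∈ Finset.range (Kof w ε + 1),
        Heavy w ε k i ∧ inInterval ε k (comp w Finset.univ π i))).card : ℝ)
      ≤ (2 / ε) * (⌈Real.logb (1 + ε) ((n : ℝ) * (wmax / 3))⌉₊ : ℝ) := by
  obtain ⟨m, hm, hεm⟩ := hεinv
  have hε0 : 0 < ε := hε.1
  have hb : 1 < 1 + ε := by linarith
  have hinj : Function.Injective π := fun i j hij => hπ.injOn (by simp) (by simp) hij
  have hn0 : (2 : ℝ) ≤ n := by exact_mod_cast hn
  have hle : ∀ i, w i ≤ wmax := fun i => hwmax.2 ⟨i, rfl⟩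
  have hmax3 : 3 ≤ wmax := by
    obtain ⟨i, hi⟩ := hwmin.2
    exact hi ▸ hle i
  have hρ : 2 ≤ (n : ℝ) * (wmax / 3) := by nlinarith
  set L := ⌈Real.logb (1 + ε) ((n : ℝ) * (wmax / 3))⌉₊ with hL
  have hL1 : 1 ≤ L := Nat.ceil_pos.2 (Real.logb_pos hb (by linarith))
  have hlow : ∀ i, 3 ≤ comp w univ π i := fun i =>
    (hwmin.1 i).trans (single_le_sum (f := w) (fun j _ => (hw j).le) (by simp))
  have hupp : ∀ i, comp w univ π i ≤ 3 * ((n : ℝ) * (wmax / 3)) := by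
    intro i
    calc comp w univ π i ≤ ∑ j, w j :=
          sum_le_sum_of_subset_of_nonneg (filter_subset _ _) fun j _ _ => (hw j).le
      _ ≤ ∑ _j : Fin n, wmax := sum_le_sum fun j _ => hle j
      _ = 3 * ((n : ℝ) * (wmax / 3)) := by simp; ring
  set G := univ.filter (fun i : Fin n => ∃ k ∈ Finset.range (Kof w ε + 1),
        Heavy w ε k i ∧ inInterval ε k (comp w univ π i)) with hG
  have hGmem : ∀ i ∈ G, ∃ k, Heavy w ε k i ∧ inInterval ε k (comp w univ π i) := by
    intro i hi
    simp only [hG, mem_filter_univ] at hi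
    obtain ⟨k, -, hk⟩ := hi
    exact ⟨k, hk⟩
  set a := ⌈Real.logb (1 + ε) 3⌉₊ with ha
  have hmaps : ∀ i ∈ G, ⌈Real.logb (1 + ε) (comp w univ π i)⌉₊ ∈ Icc a (a + L) := by
    intro i _
    have h3 := hlow i
    rw [mem_Icc]
    refine ⟨Nat.ceil_mono (Real.logb_le_logb_of_le hb (by norm_num) h3), ?_⟩
    rw [Nat.ceil_le, Nat.cast_add]
    calc Real.logb (1 + ε) (comp w univ π i)
        ≤ Real.logb (1 + ε) (3 * ((n : ℝ) * (wmax / 3))) :=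
          Real.logb_le_logb_of_le hb (by linarith) (hupp i)
      _ = Real.logb (1 + ε) 3 + Real.logb (1 + ε) ((n : ℝ) * (wmax / 3)) :=
          Real.logb_mul (by norm_num) (by linarith)
      _ ≤ a + L := add_le_add (Nat.le_ceil _) (Nat.le_ceil _)
  have hcard : G.card ≤ m * (Icc a (a + L)).card := by
    refine card_le_mul_card_image_of_maps_to hmaps m fun k _ => ?_
    by_cases hk : k = 0
    · -- No completion time lies in `I_0`, as all of them exceed `1`.
      rw [filter_eq_empty_iff.2, card_empty]
      · exact Nat.zero_le _
      · intro i hi hik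
        obtain ⟨k', -, hk'⟩ := hGmem i hi
        obtain ⟨h0, h1⟩ := ceil_logb_eq_of_inInterval hε0 (by linarith [hlow i]) hk'
        omega
    · refine card_heavy_le hw hinj hm hεm hk fun i hi => ?_
      obtain ⟨hiG, hik⟩ := mem_filter.1 hi
      obtain ⟨k', hk'⟩ := hGmem i hiG
      obtain ⟨-, h1⟩ := ceil_logb_eq_of_inInterval hε0 (by linarith [hlow i]) hk'.2
      rwa [← hik, h1]
  have hcard' : G.card ≤ m * (2 * L) := by
    refine hcard.trans (Nat.mul_le_mul_left m ?_)
    rw [Nat.card_Icc]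
    omega
  have hfin : (2 / ε) * (L : ℝ) = ((m * (2 * L) : ℕ) : ℝ) := by
    rw [hεm]
    push_cast
    field_simp
  rw [hfin]
  exact_mod_cast hcard'
end
end
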